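/- arXiv:1103.4722 — 3 statements merged into one kernel-verified Lean document; each statement's English description precedes it below -/
import Mathlib

section
/- Let 0 < κ < 1 and define φ_in, φ_out : ℝ² → ℝ² by φ_in(x) = (κ/(κ+1))·x and φ_out(x) = (κ/(κ+1))·x/‖x‖². Then for every x ∈ ℝ² with ‖x‖ = 1, the Fréchet derivatives satisfy Dφ_out(x)[x] − κ·Dφ_in(x)[x] = −κ·x; i.e. the explicit function φ satisfies the transmission condition ∂φ⁺/∂n − κ·∂φ⁻/∂n = −κ·n on the unit circle, where the normal direction at x is n = x. -/
/-- The explicit solution `φ` of the transmission problem, with interior part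
`φ_in(x) = (κ/(κ+1))·x` and exterior part `φ_out(x) = (κ/(κ+1))·x/‖x‖²`,
satisfies the transmission condition
`Dφ_out(x)[x] − κ·Dφ_in(x)[x] = −κ·x` on the unit circle. -/
theorem transmission_condition (κ : ℝ) (hκ0 : 0 < κ) (hκ1 : κ < 1)
    (x : EuclideanSpace ℝ (Fin 2)) (hx : ‖x‖ = 1) :
    fderiv ℝ (fun y : EuclideanSpace ℝ (Fin 2) => (κ / (κ + 1) / ‖y‖^2) • y) x x
      - κ • fderiv ℝ (fun y : EuclideanSpace ℝ (Fin 2) => (κ / (κ + 1)) • y) x x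
      = -κ • x := by
  have hk : κ + 1 ≠ 0 := by positivity
  have h1 : HasFDerivAt (fun y : EuclideanSpace ℝ (Fin 2) => ‖y‖^2) (2 • innerSL ℝ x) x :=
    (hasStrictFDerivAt_norm_sq x).hasFDerivAt
  have hne : ‖x‖^2 ≠ 0 := by rw [hx]; norm_num
  have h2 : HasDerivAt (fun t : ℝ => κ / (κ + 1) / t) (κ / (κ + 1) * (-((‖x‖^2)^2)⁻¹)) (‖x‖^2) := by
    simpa only [div_eq_mul_inv] using (hasDerivAt_inv hne).const_mul (κ / (κ + 1))
  have h3 := (h2.comp_hasFDerivAt x h1).smul (hasFDerivAt_id x)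
  have h4 : HasFDerivAt (fun y : EuclideanSpace ℝ (Fin 2) => (κ / (κ + 1)) • y)
      ((κ / (κ + 1)) • ContinuousLinearMap.id ℝ _) x :=
    (hasFDerivAt_id x).const_smul (κ / (κ + 1))
  have e3 : fderiv ℝ (fun y : EuclideanSpace ℝ (Fin 2) => (κ / (κ + 1) / ‖y‖^2) • y) x = _ :=
    h3.fderiv
  rw [e3, h4.fderiv]
  simp [hx, smul_smul]
  simp only [← neg_smul, ← add_smul, ← sub_smul]
  congr 1
  field_simp
  ring
end

section
/- Let ε > 0, let 0 < c < 1, and let p, q ∈ ℝ² with ‖p − q‖ ≤ 2·ε·√(1−c²). Then every x ∈ ℝ² with dist(x, [p,q]) < c·ε satisfies ‖x − p‖ < ε or ‖x − q‖ < ε; equivalently, the open cε-neighborhood of the segment [p,q] is contained in B_ε(p) ∪ B_ε(q). -/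
/-- If `‖p − q‖ ≤ 2ε√(1−c²)`, then every point at distance `< cε` from the
segment `[p,q]` lies in `B_ε(p) ∪ B_ε(q)`. -/
theorem segment_neighborhood_covered (ε c : ℝ) (hε : 0 < ε)
    (hc0 : 0 < c) (hc1 : c < 1)
    (p q : EuclideanSpace ℝ (Fin 2))
    (hpq : ‖p - q‖ ≤ 2 * ε * Real.sqrt (1 - c^2))
    (x : EuclideanSpace ℝ (Fin 2))
    (hx : Metric.infDist x (segment ℝ p q) < c * ε) :
    ‖x - p‖ < ε ∨ ‖x - q‖ < ε := by
  have hne : (segment ℝ p q).Nonempty := ⟨p, left_mem_segment ℝ p q⟩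
  obtain ⟨y, ⟨a, b, ha, hb, hab, rfl⟩, hy⟩ := (Metric.infDist_lt_iff hne).1 hx
  rw [dist_eq_norm] at hy
  have key : a * ‖x - p‖ ^ 2 + b * ‖x - q‖ ^ 2
      = ‖x - (a • p + b • q)‖ ^ 2 + a * b * ‖p - q‖ ^ 2 := by
    obtain rfl : b = 1 - a := by linarith
    simp only [EuclideanSpace.norm_sq_eq, Fin.sum_univ_two, Real.norm_eq_abs, sq_abs,
      PiLp.sub_apply, PiLp.add_apply, PiLp.smul_apply, smul_eq_mul]
    ring
  have hs : Real.sqrt (1 - c ^ 2) ^ 2 = 1 - c ^ 2 := Real.sq_sqrt (by nlinarith)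
  have h1 : ‖x - (a • p + b • q)‖ ^ 2 < (c * ε) ^ 2 :=
    pow_lt_pow_left₀ hy (norm_nonneg _) (by norm_num)
  have h2 : ‖p - q‖ ^ 2 ≤ 4 * ε ^ 2 * (1 - c ^ 2) := by
    calc ‖p - q‖ ^ 2 ≤ (2 * ε * Real.sqrt (1 - c ^ 2)) ^ 2 :=
          pow_le_pow_left₀ (norm_nonneg _) hpq 2
      _ = 4 * ε ^ 2 * Real.sqrt (1 - c ^ 2) ^ 2 := by ring
      _ = _ := by rw [hs]
  have h3 : a * b ≤ 1 / 4 := by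
    obtain rfl : b = 1 - a := by linarith
    nlinarith [sq_nonneg (2 * a - 1)]
  have h4 : a * b * ‖p - q‖ ^ 2 ≤ 1 / 4 * (4 * ε ^ 2 * (1 - c ^ 2)) :=
    mul_le_mul h3 h2 (by positivity) (by norm_num)
  by_contra! h
  have h5 : ε ^ 2 ≤ ‖x - p‖ ^ 2 := pow_le_pow_left₀ hε.le h.1 2
  have h6 : ε ^ 2 ≤ ‖x - q‖ ^ 2 := pow_le_pow_left₀ hε.le h.2 2
  have h7 := mul_le_mul_of_nonneg_left h5 ha
  have h8 := mul_le_mul_of_nonneg_left h6 hb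
  have h9 : a * ε ^ 2 + b * ε ^ 2 = ε ^ 2 := by rw [← add_mul, hab, one_mul]
  linarith [mul_pow c ε 2]
end

section
/- Let a₁, b₁, …, a_k, b_k ∈ ℝ² and let ε > 0. Then the 2-dimensional Lebesgue measure of the open ε-neighborhood {x ∈ ℝ² : dist(x, ⋃_{i=1}^k [a_i,b_i]) < ε} of the union of the segments [a_i,b_i] is at most 2·ε·∑_{i=1}^k ‖b_i − a_i‖ + k·π·ε². -/
open MeasureTheory

lemma seg_basis (c : EuclideanSpace ℝ (Fin 2)) :
    ∃ B : OrthonormalBasis (Fin 2) ℝ (EuclideanSpace ℝ (Fin 2)), c = ‖c‖ • B 0 := by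
  by_cases hc : c = 0
  · exact ⟨EuclideanSpace.basisFun (Fin 2) ℝ, by simp [hc]⟩
  · have hn : ‖c‖ ≠ 0 := norm_ne_zero_iff.mpr hc
    have ho : Orthonormal ℝ (({0} : Set (Fin 2)).domRestrict
        (fun _ => (‖c‖⁻¹ • c : EuclideanSpace ℝ (Fin 2)))) := by
      refine ⟨fun i => ?_, fun i j hij => (hij (Subsingleton.elim _ _)).elim⟩
      change ‖‖c‖⁻¹ • c‖ = 1
      rw [norm_smul, norm_inv, norm_norm, inv_mul_cancel₀ hn]
    obtain ⟨B, hB⟩ := ho.exists_orthonormalBasis_extension_of_card_eq (by simp)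
    refine ⟨B, ?_⟩
    rw [hB 0 rfl, smul_smul, mul_inv_cancel₀ hn, one_smul]

lemma seg_one (a b : EuclideanSpace ℝ (Fin 2)) (ε : ℝ) (hε : 0 < ε) :
    volume (Metric.thickening ε (segment ℝ a b))
      ≤ ENNReal.ofReal (2 * ε * ‖b - a‖ + Real.pi * ε^2) := by
  obtain ⟨B, hB⟩ := seg_basis (b - a)
  set L := ‖b - a‖ with hL
  have hL0 : 0 ≤ L := norm_nonneg _
  have hn : ∀ z : EuclideanSpace ℝ (Fin 2), ‖z‖ ^ 2 = (B.repr z 0) ^ 2 + (B.repr z 1) ^ 2 := by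
    intro z
    rw [← B.repr.norm_map z, EuclideanSpace.norm_sq_eq]
    simp
  have hlt : ∀ z : EuclideanSpace ℝ (Fin 2),
      ‖z‖ < ε ↔ (B.repr z 0) ^ 2 + (B.repr z 1) ^ 2 < ε ^ 2 := by
    intro z
    rw [← hn, sq_lt_sq₀ (norm_nonneg _) hε.le]
  have hr0 : B.repr (b - a) 0 = L := by rw [hB]; simp
  have hr1 : B.repr (b - a) 1 = 0 := by rw [hB]; simp
  have hcont : ∀ i : Fin 2, Continuous fun x : EuclideanSpace ℝ (Fin 2) => B.repr (x - a) i := by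
    intro i
    fun_prop
  set R : Set (EuclideanSpace ℝ (Fin 2)) := (fun x => WithLp.ofLp (B.repr x)) ⁻¹'
    (Set.Icc (![B.repr a 0, B.repr a 1 - ε]) (![B.repr a 0 + L, B.repr a 1 + ε])) with hR
  set H1 : Set (EuclideanSpace ℝ (Fin 2)) := Metric.ball a ε ∩ {x | B.repr (x - a) 0 < 0} with hH1
  set H2 : Set (EuclideanSpace ℝ (Fin 2)) := Metric.ball a ε ∩ {x | 0 < B.repr (x - a) 0} with hH2
  have hvR : volume R = ENNReal.ofReal (2 * ε * L) := by
    have hmp : MeasurePreserving (fun x => WithLp.ofLp (B.repr x)) volume volume :=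
      (PiLp.volume_preserving_ofLp (Fin 2)).comp B.measurePreserving_repr
    rw [hR, hmp.measure_preimage measurableSet_Icc.nullMeasurableSet, Real.volume_Icc_pi]
    simp only [Fin.prod_univ_two]
    rw [← ENNReal.ofReal_mul (by simpa using hL0)]
    congr 1
    simp
    ring
  have hvH : volume H1 + volume H2 ≤ ENNReal.ofReal (Real.pi * ε ^ 2) := by
    have hm : MeasurableSet H2 :=
      measurableSet_ball.inter (isOpen_lt continuous_const (hcont 0)).measurableSet
    rw [← measure_union _ hm]
    · refine (measure_mono (Set.union_subset Set.inter_subset_left Set.inter_subset_left)).trans ?_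
      rw [EuclideanSpace.volume_ball_fin_two, mul_comm Real.pi, ENNReal.ofReal_mul (by positivity),
        ENNReal.ofReal_pow hε.le]
    · rw [Set.disjoint_left]
      rintro x ⟨_, h1⟩ ⟨_, h2⟩
      simp only [Set.mem_setOf_eq] at h1 h2
      exact lt_asymm h1 h2
  have hsub : Metric.thickening ε (segment ℝ a b) ⊆ R ∪ (H1 ∪ (fun x => x + (a - b)) ⁻¹' H2) := by
    intro x hx
    rw [Metric.mem_thickening_iff] at hx
    obtain ⟨z, hz, hxz⟩ := hx
    rw [segment_eq_image'] at hz
    obtain ⟨t, ⟨ht0, ht1⟩, rfl⟩ := hz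
    rw [dist_eq_norm, hlt] at hxz
    have e : x - (a + t • (b - a)) = (x - a) - t • (b - a) := by abel
    have e0 : B.repr (x - (a + t • (b - a))) 0 = B.repr (x - a) 0 - t * L := by
      rw [e, map_sub, map_smul, PiLp.sub_apply, PiLp.smul_apply, hr0, smul_eq_mul]
    have e1 : B.repr (x - (a + t • (b - a))) 1 = B.repr (x - a) 1 := by
      rw [e, map_sub, map_smul, PiLp.sub_apply, PiLp.smul_apply, hr1]; simp
    rw [e0, e1] at hxz
    have htL : 0 ≤ t * L := mul_nonneg ht0 hL0
    have htL' : t * L ≤ L := mul_le_of_le_one_left hL0 ht1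
    rcases lt_or_ge (B.repr (x - a) 0) 0 with h0 | h0
    · right; left
      refine ⟨?_, h0⟩
      rw [Metric.mem_ball, dist_eq_norm, hlt]
      nlinarith
    rcases lt_or_ge L (B.repr (x - a) 0) with h1 | h1
    · right; right
      have f : x + (a - b) - a = (x - a) - (b - a) := by abel
      have f0 : B.repr (x + (a - b) - a) 0 = B.repr (x - a) 0 - L := by
        rw [f, map_sub, PiLp.sub_apply, hr0]
      have f1 : B.repr (x + (a - b) - a) 1 = B.repr (x - a) 1 := by
        rw [f, map_sub, PiLp.sub_apply, hr1, sub_zero]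
      refine ⟨?_, ?_⟩
      · rw [Metric.mem_ball, dist_eq_norm, hlt, f0, f1]
        nlinarith
      · show 0 < B.repr (x + (a - b) - a) 0
        rw [f0]; linarith
    · left
      have h2 : |B.repr (x - a) 1| < ε := by
        apply abs_lt_of_sq_lt_sq _ hε.le
        nlinarith [sq_nonneg (B.repr (x - a) 0 - t * L)]
      rw [abs_lt] at h2
      simp only [map_sub, PiLp.sub_apply] at h0 h1 h2
      rw [hR, Set.mem_preimage, Set.mem_Icc, Pi.le_def, Pi.le_def]
      simp only [Fin.forall_fin_two, Matrix.cons_val_zero, Matrix.cons_val_one]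
      refine ⟨⟨?_, ?_⟩, ⟨?_, ?_⟩⟩ <;> linarith
  calc _ ≤ volume (R ∪ (H1 ∪ (fun x => x + (a - b)) ⁻¹' H2)) := measure_mono hsub
    _ ≤ volume R + (volume H1 + volume ((fun x => x + (a - b)) ⁻¹' H2)) :=
      (measure_union_le _ _).trans (by gcongr; exact measure_union_le _ _)
    _ = volume R + (volume H1 + volume H2) := by rw [measure_preimage_add_right]
    _ ≤ ENNReal.ofReal (2 * ε * L) + ENNReal.ofReal (Real.pi * ε ^ 2) := by
      rw [hvR]; gcongr
    _ = _ := by rw [ENNReal.ofReal_add (by positivity) (by positivity)]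

/-- The Lebesgue measure of the open `ε`-neighborhood of a union of `k`
segments is at most `2ε·∑‖bᵢ−aᵢ‖ + kπε²`. -/
theorem volume_segment_neighborhood (k : ℕ)
    (a b : Fin k → EuclideanSpace ℝ (Fin 2)) (ε : ℝ) (hε : 0 < ε) :
    volume {x : EuclideanSpace ℝ (Fin 2) |
        EMetric.infEdist x (⋃ i, segment ℝ (a i) (b i)) < ENNReal.ofReal ε}
      ≤ ENNReal.ofReal (2 * ε * ∑ i, ‖b i - a i‖ + k * Real.pi * ε^2) := by
  change volume (Metric.thickening ε (⋃ i, segment ℝ (a i) (b i))) ≤ _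
  rw [Metric.thickening_iUnion]
  refine (measure_iUnion_fintype_le _ _).trans ?_
  refine (Finset.sum_le_sum fun i _ => seg_one (a i) (b i) ε hε).trans ?_
  rw [← ENNReal.ofReal_sum_of_nonneg (fun i _ => by positivity)]
  apply ENNReal.ofReal_le_ofReal
  rw [Finset.sum_add_distrib, ← Finset.mul_sum]
  simp [mul_assoc]
end
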